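/- Let X be a path connected Hausdorff paracompact space, u ∈ H^*(X; G) a singular cohomology class, and f: Y → X a continuous map of Hausdorff paracompact spaces. Then swgt(f*u) ≥ swgt u. -/

import Mathlib

open Set

/-- A subset `U` of `A` is `φ`-categorical if it is open (in `A`) and the restriction of `φ`
to `U` is null-homotopic. -/
def IsCategoricalSet {A X : Type*} [TopologicalSpace A] [TopologicalSpace X]
    (φ : C(A, X)) (U : Set A) : Prop :=
  IsOpen U ∧ (φ.comp ⟨Subtype.val, continuous_subtype_val⟩ : C(U, X)).Nullhomotopic

/-- `CatLE φ k` says that `A` can be covered by `k + 1` `φ`-categorical open sets. -/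
def CatLE {A X : Type*} [TopologicalSpace A] [TopologicalSpace X] (φ : C(A, X)) (k : ℕ) : Prop :=
  ∃ U : Fin (k + 1) → Set A, (∀ i, IsCategoricalSet φ (U i)) ∧ (⋃ i, U i) = Set.univ

/-- The Lusternik–Schnirelmann category of a map `φ : A → X`: the least `k` such that `A` can
be covered by `k + 1` `φ`-categorical open sets, as an element of `ℕ∞`
(`⊤` if no finite categorical cover exists, i.e. if `cat φ` is undefined). -/
noncomputable def catMap {A X : Type*} [TopologicalSpace A] [TopologicalSpace X]
    (φ : C(A, X)) : ℕ∞ :=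
  sInf {n : ℕ∞ | ∃ k : ℕ, n = k ∧ CatLE φ k}

/-- The Lusternik–Schnirelmann category of a space: `cat X = cat (id X)`. -/
noncomputable def catSpace (X : Type*) [TopologicalSpace X] : ℕ∞ :=
  catMap (ContinuousMap.id X)


/-- The standard topological `n`-simplex. -/
abbrev TopSimplex (n : ℕ) := (stdSimplex ℝ (Fin (n + 1)) : Set (Fin (n + 1) → ℝ))

/-- The affine map of standard simplices induced by a map of vertex sets. -/
def simplexMap {a b : ℕ} (e : Fin (a + 1) → Fin (b + 1)) :
    C(TopSimplex a, TopSimplex b) where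
  toFun x := ⟨fun k => ∑ j, if e j = k then (x : Fin (a + 1) → ℝ) j else 0, by
    constructor
    · intro k
      refine Finset.sum_nonneg fun j _ => ?_
      split
      · exact x.2.1 j
      · exact le_rfl
    · show ∑ k, ∑ j, (if e j = k then (x : Fin (a + 1) → ℝ) j else 0) = 1
      rw [Finset.sum_comm]
      calc ∑ j, ∑ k, (if e j = k then (x : Fin (a + 1) → ℝ) j else 0)
          = ∑ j, (x : Fin (a + 1) → ℝ) j := by
            refine Finset.sum_congr rfl fun j _ => ?_
            simp
        _ = 1 := x.2.2⟩
  continuous_toFun := by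
    refine Continuous.subtype_mk (continuous_pi fun k => ?_) _
    refine continuous_finset_sum _ fun j _ => ?_
    by_cases h : e j = k <;> simp only [h, if_true, if_false]
    · exact (continuous_apply j).comp continuous_subtype_val
    · exact continuous_const

/-- The `i`-th face inclusion of standard simplices. -/
def simplexFace {n : ℕ} (i : Fin (n + 2)) : C(TopSimplex n, TopSimplex (n + 1)) :=
  simplexMap i.succAbove

/-- Singular `n`-cochains on `X` with coefficients in `G`. -/
abbrev SCochain (X : Type*) [TopologicalSpace X] (G : Type*) [AddCommGroup G] (n : ℕ) :=
  C(TopSimplex n, X) → G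

/-- The singular coboundary homomorphism. -/
noncomputable def coboundary (X : Type*) [TopologicalSpace X] (G : Type*) [AddCommGroup G] (n : ℕ) :
    SCochain X G n →+ SCochain X G (n + 1) where
  toFun c := fun σ => ∑ i : Fin (n + 2), (-1 : ℤ) ^ (i : ℕ) • c (σ.comp (simplexFace i))
  map_zero' := by funext σ; simp
  map_add' _ _ := by funext σ; simp [smul_add, Finset.sum_add_distrib]

/-- The subgroup of singular `n`-cocycles. -/
noncomputable def scocycles (X : Type*) [TopologicalSpace X] (G : Type*) [AddCommGroup G] (n : ℕ) :
    AddSubgroup (SCochain X G n) :=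
  (coboundary X G n).ker

/-- The subgroup of singular `n`-coboundaries. -/
noncomputable def scoboundaries (X : Type*) [TopologicalSpace X] (G : Type*) [AddCommGroup G] :
    ∀ n : ℕ, AddSubgroup (SCochain X G n)
  | 0 => ⊥
  | n + 1 => (coboundary X G n).range

/-- Singular cohomology `H^n(X; G)`: cocycles modulo coboundaries. -/
abbrev SCohomology (X : Type*) [TopologicalSpace X] (G : Type*) [AddCommGroup G] (n : ℕ) :=
  scocycles X G n ⧸ (scoboundaries X G n).addSubgroupOf (scocycles X G n)

variable {X Y : Type*} [TopologicalSpace X] [TopologicalSpace Y]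
variable (G : Type*) [AddCommGroup G]

/-- The pullback of singular cochains along a continuous map. -/
noncomputable def cochainPullback (f : C(X, Y)) (n : ℕ) : SCochain Y G n →+ SCochain X G n where
  toFun c := fun σ => c (f.comp σ)
  map_zero' := rfl
  map_add' _ _ := rfl

theorem cochainPullback_coboundary (f : C(X, Y)) (n : ℕ) (c : SCochain Y G n) :
    cochainPullback G f (n + 1) (coboundary Y G n c) =
      coboundary X G n (cochainPullback G f n c) := by
  funext σ
  simp [cochainPullback, coboundary, ContinuousMap.comp_assoc]

/-- The pullback of singular cocycles along a continuous map. -/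
noncomputable def cocyclePullback (f : C(X, Y)) (n : ℕ) : scocycles Y G n →+ scocycles X G n :=
  AddMonoidHom.codRestrict ((cochainPullback G f n).comp (scocycles Y G n).subtype) _
    (by
      rintro ⟨c, hc⟩
      have hc' : coboundary Y G n c = 0 := AddMonoidHom.mem_ker.mp hc
      show cochainPullback G f n c ∈ (coboundary X G n).ker
      rw [AddMonoidHom.mem_ker, ← cochainPullback_coboundary, hc']
      exact map_zero _)

/-- The map induced on singular cohomology by a continuous map. -/
noncomputable def cohPullback (f : C(X, Y)) (n : ℕ) :
    SCohomology Y G n →+ SCohomology X G n :=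
  QuotientAddGroup.map _ _ (cocyclePullback G f n) (by
    rintro ⟨c, hc⟩ h
    rw [AddSubgroup.mem_addSubgroupOf] at h
    rw [AddSubgroup.mem_comap, AddSubgroup.mem_addSubgroupOf]
    show cochainPullback G f n c ∈ scoboundaries X G n
    have h' : c ∈ scoboundaries Y G n := h
    clear h hc
    match n, c, h' with
    | 0, c, h' =>
      obtain rfl : c = 0 := AddSubgroup.mem_bot.mp h'
      show cochainPullback G f 0 0 ∈ (⊥ : AddSubgroup (SCochain X G 0))
      rw [map_zero]
      exact AddSubgroup.zero_mem _
    | n + 1, c, h' =>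
      obtain ⟨b, hb⟩ := h'
      exact ⟨cochainPullback G f n b, by
        rw [← hb]; exact (cochainPullback_coboundary G f n b).symm⟩)
universe u

/-- The strict category weight of a singular cohomology class `u ∈ H^q(X; G)`: the supremum
of all integers `k` such that `φ*u = 0` for every continuous map `φ : A → X` from a Hausdorff
paracompact space `A` with `cat φ < k`. -/
noncomputable def swgt {X : Type u} [TopologicalSpace X] {G : Type*} [AddCommGroup G] {q : ℕ}
    (u : SCohomology X G q) : ℕ∞ :=
  sSup {n : ℕ∞ | ∃ k : ℕ, n = k ∧
    ∀ (A : Type u) [TopologicalSpace A] [T2Space A] [ParacompactSpace A] (φ : C(A, X)),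
      catMap φ < (k : ℕ∞) → cohPullback G φ q u = 0}

section Composition

variable {Z : Type*} [TopologicalSpace Z]

theorem IsCategoricalSet.comp_right {φ : C(X, Y)} {U : Set X} (hU : IsCategoricalSet φ U)
    (g : C(Y, Z)) : IsCategoricalSet (g.comp φ) U :=
  ⟨hU.1, hU.2.comp_right g⟩

theorem CatLE.comp_right {φ : C(X, Y)} {k : ℕ} (hφ : CatLE φ k) (g : C(Y, Z)) :
    CatLE (g.comp φ) k :=
  let ⟨U, hU, hcover⟩ := hφ
  ⟨U, fun i => (hU i).comp_right g, hcover⟩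

theorem catMap_comp_le (g : C(Y, Z)) (φ : C(X, Y)) : catMap (g.comp φ) ≤ catMap φ :=
  sInf_le_sInf fun _ ⟨k, hk, hφ⟩ => ⟨k, hk, hφ.comp_right g⟩

theorem cohPullback_comp (g : C(Y, Z)) (f : C(X, Y)) (n : ℕ) :
    cohPullback G (g.comp f) n = (cohPullback G f n).comp (cohPullback G g n) :=
  QuotientAddGroup.addMonoidHom_ext _ rfl

end Composition

theorem swgt_pullback_ge_general {X Y : Type u} [TopologicalSpace X] [TopologicalSpace Y]
    {G : Type*} [AddCommGroup G] {q : ℕ} (u : SCohomology X G q) (f : C(Y, X)) :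
    swgt u ≤ swgt (cohPullback G f q u) := by
  refine sSup_le_sSup ?_
  rintro _ ⟨k, rfl, hu⟩
  refine ⟨k, rfl, fun A _ _ _ φ hφ => ?_⟩
  have hcat : catMap (f.comp φ) < k := (catMap_comp_le f φ).trans_lt hφ
  calc cohPullback G φ q (cohPullback G f q u)
      = cohPullback G (f.comp φ) q u := by rw [cohPullback_comp, AddMonoidHom.comp_apply]
    _ = 0 := hu A (f.comp φ) hcat

/-- Let `X` be a path connected Hausdorff paracompact space, `u ∈ H^*(X; G)`, and
`f : Y → X` a continuous map of Hausdorff paracompact spaces.  Then `swgt (f*u) ≥ swgt u`. -/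
theorem swgt_pullback_ge {X Y : Type u} [TopologicalSpace X] [PathConnectedSpace X] [T2Space X]
    [ParacompactSpace X] [TopologicalSpace Y] [T2Space Y] [ParacompactSpace Y]
    {G : Type*} [AddCommGroup G] {q : ℕ} (u : SCohomology X G q) (f : C(Y, X)) :
    swgt u ≤ swgt (cohPullback G f q u) :=
  swgt_pullback_ge_general u f
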